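/- Let p ≠ q be points in the root square and let δ = max(|px − qx|, |py − qy|) > 0. Then (i) for every d ∈ ℕ with w/2^d ≤ δ one has R_d(p) ≠ R_d(q), i.e., the routing paths of p and q have diverged by depth d; and (ii) the least divergence depth d₀ (the least d with R_d(p) ≠ R_d(q)) satisfies δ < w/2^{d₀−1}. -/

import Mathlib

/-- The four quadrant directions. -/
inductive Dir : Type
  | nw | ne | sw | se
  deriving DecidableEq

noncomputable section

/-- A half-open square `[x, x+w) × [y, y+w)` given by its corner `(x, y)` and side `w`. -/
structure Sq where
  x : ℝ
  y : ℝ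
  w : ℝ

/-- The set of points of a half-open square. -/
def Sq.set (R : Sq) : Set (ℝ × ℝ) :=
  {p : ℝ × ℝ | R.x ≤ p.1 ∧ p.1 < R.x + R.w ∧ R.y ≤ p.2 ∧ p.2 < R.y + R.w}

/-- The quadrant of a square in a given direction: a half-open square of side `w/2`. -/
def Sq.quad (R : Sq) : Dir → Sq
  | .nw => ⟨R.x, R.y, R.w / 2⟩
  | .ne => ⟨R.x + R.w / 2, R.y, R.w / 2⟩
  | .sw => ⟨R.x, R.y + R.w / 2, R.w / 2⟩
  | .se => ⟨R.x + R.w / 2, R.y + R.w / 2, R.w / 2⟩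

/-- The direction (routing quadrant) of a point `p` in the square `R`. -/
def Sq.dirOf (R : Sq) (p : ℝ × ℝ) : Dir :=
  if p.1 < R.x + R.w / 2 then
    if p.2 < R.y + R.w / 2 then .nw else .sw
  else
    if p.2 < R.y + R.w / 2 then .ne else .se

/-- The square reached after `d` routing steps for the point `p`, starting from the root
square `R` (so `routeSq R p 0 = R`). -/
def routeSq (R : Sq) (p : ℝ × ℝ) : ℕ → Sq
  | 0 => R
  | n + 1 => (routeSq R p n).quad ((routeSq R p n).dirOf p)

/-- The `n`-th element of the routing sequence of `p`, i.e. the direction taken at step `n`. -/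
def routeDir (R : Sq) (p : ℝ × ℝ) (n : ℕ) : Dir :=
  (routeSq R p n).dirOf p

/-! Every routing step keeps the point inside the current square and halves the side. Two points
whose routes agree at depth `d` therefore lie in a common square of side `w / 2 ^ d`, so in the sup
metric they are closer than `w / 2 ^ d`. -/

namespace Sq

theorem quad_w (R : Sq) (d : Dir) : (R.quad d).w = R.w / 2 := by
  cases d <;> rfl

theorem mem_quad_dirOf {R : Sq} {p : ℝ × ℝ} (hp : p ∈ R.set) :
    p ∈ (R.quad (R.dirOf p)).set := by
  obtain ⟨hx, hxw, hy, hyw⟩ := hp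
  unfold dirOf
  split_ifs <;> refine ⟨?_, ?_, ?_, ?_⟩ <;> dsimp only [quad] <;> linarith

theorem dist_lt_of_mem {R : Sq} {p q : ℝ × ℝ} (hp : p ∈ R.set) (hq : q ∈ R.set) :
    dist p q < R.w := by
  obtain ⟨hpx, hpxw, hpy, hpyw⟩ := hp
  obtain ⟨hqx, hqxw, hqy, hqyw⟩ := hq
  have hx : |p.1 - q.1| < R.w := abs_sub_lt_iff.mpr ⟨by linarith, by linarith⟩
  have hy : |p.2 - q.2| < R.w := abs_sub_lt_iff.mpr ⟨by linarith, by linarith⟩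
  simpa only [Prod.dist_eq, Real.dist_eq] using max_lt hx hy

end Sq

theorem routeSq_w (R : Sq) (p : ℝ × ℝ) (d : ℕ) : (routeSq R p d).w = R.w / 2 ^ d := by
  induction d with
  | zero => simp [routeSq]
  | succ d ih => rw [routeSq, Sq.quad_w, ih, pow_succ, div_div]

theorem mem_routeSq {R : Sq} {p : ℝ × ℝ} (hp : p ∈ R.set) (d : ℕ) : p ∈ (routeSq R p d).set := by
  induction d with
  | zero => exact hp
  | succ d ih => exact Sq.mem_quad_dirOf ih

theorem dist_lt_of_routeSq_eq {R : Sq} {p q : ℝ × ℝ} (hp : p ∈ R.set) (hq : q ∈ R.set) {d : ℕ}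
    (h : routeSq R p d = routeSq R q d) : dist p q < R.w / 2 ^ d :=
  calc
    dist p q < (routeSq R p d).w := Sq.dist_lt_of_mem (mem_routeSq hp d) (h ▸ mem_routeSq hq d)
    _ = R.w / 2 ^ d := routeSq_w R p d

/-- Let `p ≠ q` be points in the root square and
`δ = max(|px − qx|, |py − qy|) > 0`.  Then (i) for every `d` with `w/2^d ≤ δ` one has
`R_d(p) ≠ R_d(q)` (the routing paths have diverged by depth `d`); and (ii) the least
divergence depth `d₀` satisfies `δ < w/2^{d₀−1}`. -/
theorem divergence_depth_bounds (x₀ y₀ w : ℝ) (hw : 0 < w) (p q : ℝ × ℝ)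
    (hp : p ∈ (Sq.mk x₀ y₀ w).set) (hq : q ∈ (Sq.mk x₀ y₀ w).set) (hpq : p ≠ q)
    (hδ : 0 < max |p.1 - q.1| |p.2 - q.2|) :
    (∀ d : ℕ, w / 2 ^ d ≤ max |p.1 - q.1| |p.2 - q.2| →
      routeSq (Sq.mk x₀ y₀ w) p d ≠ routeSq (Sq.mk x₀ y₀ w) q d) ∧
    (∀ d₀ : ℕ,
      (routeSq (Sq.mk x₀ y₀ w) p d₀ ≠ routeSq (Sq.mk x₀ y₀ w) q d₀ ∧
        ∀ d < d₀, routeSq (Sq.mk x₀ y₀ w) p d = routeSq (Sq.mk x₀ y₀ w) q d) →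
      max |p.1 - q.1| |p.2 - q.2| < w / 2 ^ (d₀ - 1)) := by
  rw [← Real.dist_eq, ← Real.dist_eq, ← Prod.dist_eq]
  refine ⟨fun d hd heq => (dist_lt_of_routeSq_eq hp hq heq).not_ge hd, ?_⟩
  rintro d₀ ⟨hne, heq⟩
  have hd₀ : d₀ ≠ 0 := by
    rintro rfl
    exact hne rfl
  exact dist_lt_of_routeSq_eq hp hq (heq (d₀ - 1) (Nat.sub_one_lt hd₀))
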